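/- Suppose Θ = {θ_1, θ_2} and each edge cost function ℓ̃_e^θ : ℝ² → ℝ is twice continuously differentiable. For each edge e define f_e(x, y) = ∂_1 ℓ̃_e^{θ_2}(y, x) − ∂_2 ℓ̃_e^{θ_1}(y, x), and let the type-independent tolls be τ̃_e(x, y) = c_e + ∫_0^{y} f_e(q, x + y − q) dq + ψ_e(x + y) for all (x, y) (x the θ_1-edge flow, y the θ_2-edge flow), where c_e ≥ 0 and ψ_e : ℝ → ℝ is continuously differentiable. Then the abstract game associated with the routing game with these tolls admits a potential function of class C². -/

import Mathlib

/-! On each edge let `L₁ = ℓ₁ + τ` and `L₂ = ℓ₂ + τ` be the tolled costs, as functions of the edge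
flows `(x, y)`. A function `W` with `∂₁W = L₁` and `∂₂W = L₂` satisfies both potential identities on
that edge, by the fundamental theorem of calculus, and it is `C²` because `L₁, L₂` are `C¹`. By the
Poincaré lemma on `ℝ²` such a `W` exists as soon as `∂₂L₁ = ∂₁L₂`, that is, as soon as
`∂₂τ - ∂₁τ = k` with `k = ∂₁ℓ₂ - ∂₂ℓ₁`. The integral part `∫₀^y k(x + y - q, q) dq` of the toll solves
this transport equation: moving in the direction `(-1, 1)` keeps `x + y`, hence the integrand, fixed
and only moves the upper limit, at which the integrand is `k(x, y)`
(`hasDerivAt_toll_diagonal`). The remaining part `c + ψ(x + y)` is constant in that direction.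
Summing `W` over the edges gives the potential. -/

open MeasureTheory

noncomputable section

namespace RoutingGame

open scoped Classical

variable {E P : Type*}

/-- Edge flow of one type on edge `e` induced by the path flows `g` of that type:
`φ_e = ∑_{p ∈ P : e ∈ p} g_p`. -/
def edgeFlow [Fintype P] (edges : P → Finset E) (g : P → ℝ) (e : E) : ℝ :=
  ∑ p ∈ Finset.univ.filter (fun p => e ∈ edges p), g p

/-- Utility of player 1 (type `θ₁`) in the abstract game:
`U₁(g,h) = ∑_e ∫_0^{φ_e^{θ₁}} ℓ̃_e^{θ₁}(u, φ_e^{θ₂}) du`. -/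
def U1 [Fintype E] [Fintype P] (edges : P → Finset E) (ℓ1 : E → ℝ → ℝ → ℝ)
    (g h : P → ℝ) : ℝ :=
  ∑ e : E, ∫ u in (0:ℝ)..(edgeFlow edges g e), ℓ1 e u (edgeFlow edges h e)

/-- Utility of player 2 (type `θ₂`) in the abstract game:
`U₂(g,h) = ∑_e ∫_0^{φ_e^{θ₂}} ℓ̃_e^{θ₂}(φ_e^{θ₁}, u) du`. -/
def U2 [Fintype E] [Fintype P] (edges : P → Finset E) (ℓ2 : E → ℝ → ℝ → ℝ)
    (g h : P → ℝ) : ℝ :=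
  ∑ e : E, ∫ u in (0:ℝ)..(edgeFlow edges h e), ℓ2 e (edgeFlow edges g e) u

/-- `V` is a potential function for the two-player abstract game associated with
edge cost functions `ℓ1, ℓ2` (arguments of `V`: path flows of type `θ₁`, of type `θ₂`). -/
def IsPotential [Fintype E] [Fintype P] (edges : P → Finset E)
    (ℓ1 ℓ2 : E → ℝ → ℝ → ℝ) (V : (P → ℝ) → (P → ℝ) → ℝ) : Prop :=
  (∀ g g' h : P → ℝ, V g h - V g' h = U1 edges ℓ1 g h - U1 edges ℓ1 g' h) ∧
  (∀ g h h' : P → ℝ, V g h - V g h' = U2 edges ℓ2 g h - U2 edges ℓ2 g h')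

/-- The candidate potential function
`V(f) = ∑_e [∫_0^{φ₁} ℓ₁(u,φ₂) du + ∫_0^{φ₂} ℓ₂(φ₁,u) du − ∫_0^{φ₂}∫_0^{φ₁} ∂₂ℓ₁(u₁,u₂) du₁ du₂]`. -/
def Vpot [Fintype E] [Fintype P] (edges : P → Finset E)
    (ℓ1 ℓ2 : E → ℝ → ℝ → ℝ) (g h : P → ℝ) : ℝ :=
  ∑ e : E,
    ((∫ u in (0:ℝ)..(edgeFlow edges g e), ℓ1 e u (edgeFlow edges h e)) +
     (∫ u in (0:ℝ)..(edgeFlow edges h e), ℓ2 e (edgeFlow edges g e) u) -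
     ∫ u2 in (0:ℝ)..(edgeFlow edges h e),
       ∫ u1 in (0:ℝ)..(edgeFlow edges g e), deriv (fun t => ℓ1 e u1 t) u2)

/-- Differentiation under the integral sign over a compact interval, for a `C¹` integrand. -/
lemma contDiff_one_intervalIntegral {H : Type*} [NormedAddCommGroup H] [NormedSpace ℝ H]
    [ProperSpace H] {Φ : H × ℝ → ℝ} (hΦ : ContDiff ℝ 1 Φ) (a b : ℝ) :
    ContDiff ℝ 1 (fun x => ∫ t in a..b, Φ (x, t)) := by
  have hcont : Continuous (fun p : H × ℝ =>
      (fderiv ℝ Φ p).comp (ContinuousLinearMap.inl ℝ H ℝ)) :=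
    (hΦ.continuous_fderiv one_ne_zero).clm_comp continuous_const
  have hΦc := hΦ.continuous
  rw [contDiff_one_iff_hasFDerivAt]
  refine ⟨fun x => ∫ t in a..b, (fderiv ℝ Φ (x, t)).comp (ContinuousLinearMap.inl ℝ H ℝ), ?_, ?_⟩
  · exact intervalIntegral.continuous_parametric_intervalIntegral_of_continuous' hcont a b
  · intro x₀
    obtain ⟨C, hC⟩ := ((isCompact_closedBall x₀ 1).prod
      (isCompact_uIcc (a := a) (b := b))).exists_bound_of_continuousOn hcont.continuousOn
    refine intervalIntegral.hasFDerivAt_integral_of_dominated_of_fderiv_le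
      (𝕜 := ℝ) (bound := fun _ => C)
      (F' := fun x t => (fderiv ℝ Φ (x, t)).comp (ContinuousLinearMap.inl ℝ H ℝ))
      (Metric.closedBall_mem_nhds x₀ one_pos) ?_ ?_ ?_ ?_ ?_ ?_
    · exact Filter.Eventually.of_forall fun x =>
        (by fun_prop : Continuous fun t => Φ (x, t)).aestronglyMeasurable
    · exact (by fun_prop : Continuous fun t => Φ (x₀, t)).intervalIntegrable _ _
    · exact (hcont.comp (by fun_prop : Continuous fun t : ℝ => (x₀, t))).aestronglyMeasurable
    · exact Filter.Eventually.of_forall fun t ht x hx =>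
        hC (x, t) ⟨hx, Set.uIoc_subset_uIcc ht⟩
    · exact intervalIntegrable_const
    · refine Filter.Eventually.of_forall fun t _ x _ => ?_
      have h1 : HasFDerivAt Φ (fderiv ℝ Φ (x, t)) (x, t) :=
        (hΦ.differentiable one_ne_zero (x, t)).hasFDerivAt
      exact h1.comp x (hasFDerivAt_prodMk_left x t)

/-- The substitution `q = t y` turns the variable upper limit into a fixed one. -/
lemma contDiff_toll {k : ℝ × ℝ → ℝ} (hk : ContDiff ℝ 1 k) :
    ContDiff ℝ 1 (fun p : ℝ × ℝ => ∫ q in (0:ℝ)..p.2, k (p.1 + p.2 - q, q)) := by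
  have h1 : (fun p : ℝ × ℝ => ∫ q in (0:ℝ)..p.2, k (p.1 + p.2 - q, q)) =
      fun p => p.2 * ∫ t in (0:ℝ)..1, k (p.1 + p.2 - p.2 * t, p.2 * t) := by
    funext p
    simpa using (intervalIntegral.mul_integral_comp_mul_left (a := 0) (b := 1)
      (f := fun q => k (p.1 + p.2 - q, q)) p.2).symm
  rw [h1]
  refine contDiff_snd.mul (contDiff_one_intervalIntegral
    (Φ := fun z : (ℝ × ℝ) × ℝ => k (z.1.1 + z.1.2 - z.1.2 * z.2, z.1.2 * z.2)) ?_ 0 1)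
  exact hk.comp (by fun_prop)

/-- Along the line `(x - t, y + t)` the integral part of the toll has the fixed integrand
`q ↦ k (x + y - q, q)`, so its derivative at `t = 0` is `k (x, y)`. -/
lemma hasDerivAt_toll_diagonal {k : ℝ × ℝ → ℝ} (hk : Continuous k) (x y : ℝ) :
    HasDerivAt (fun t : ℝ => ∫ q in (0:ℝ)..(y + t), k ((x - t) + (y + t) - q, q)) (k (x, y)) 0 := by
  have hc : Continuous fun q : ℝ => k (x + y - q, q) := by fun_prop
  have h2 : HasDerivAt (fun s : ℝ => ∫ q in (0:ℝ)..s, k (x + y - q, q)) (k (x + y - y, y)) y :=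
    intervalIntegral.integral_hasDerivAt_right (hc.intervalIntegrable _ _)
      (hc.stronglyMeasurableAtFilter _ _) hc.continuousAt
  rw [add_sub_cancel_right] at h2
  have h3 := HasDerivAt.comp_const_add y 0 (by rwa [add_zero])
  simpa only [show ∀ t, x - t + (y + t) = x + y from fun t => by ring] using h3

lemma hasDerivAt_fst {F : ℝ × ℝ → ℝ} {F' : ℝ × ℝ →L[ℝ] ℝ} {x y : ℝ}
    (hF : HasFDerivAt F F' (x, y)) : HasDerivAt (fun t => F (t, y)) (F' (1, 0)) x :=
  hF.comp_hasDerivAt x ((hasDerivAt_id x).prodMk (hasDerivAt_const x y))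

lemma hasDerivAt_snd {F : ℝ × ℝ → ℝ} {F' : ℝ × ℝ →L[ℝ] ℝ} {x y : ℝ}
    (hF : HasFDerivAt F F' (x, y)) : HasDerivAt (fun t => F (x, t)) (F' (0, 1)) y :=
  hF.comp_hasDerivAt y ((hasDerivAt_const y x).prodMk (hasDerivAt_id y))

/-- Poincaré lemma on `ℝ²` for the form `L₁ dx + L₂ dy`, with the regularity of the primitive. -/
lemma exists_primitive {L1 L2 : ℝ × ℝ → ℝ} (h1 : ContDiff ℝ 1 L1) (h2 : ContDiff ℝ 1 L2)
    (hsymm : ∀ p, fderiv ℝ L1 p (0, 1) = fderiv ℝ L2 p (1, 0)) :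
    ∃ W : ℝ × ℝ → ℝ, ContDiff ℝ 2 W ∧
      (∀ x y, HasDerivAt (fun t => W (t, y)) (L1 (x, y)) x) ∧
      (∀ x y, HasDerivAt (fun t => W (x, t)) (L2 (x, y)) y) := by
  let A := ContinuousLinearMap.fst ℝ ℝ ℝ
  let B := ContinuousLinearMap.snd ℝ ℝ ℝ
  let ω : ℝ × ℝ → (ℝ × ℝ →L[ℝ] ℝ) := fun p => L1 p • A + L2 p • B
  have hω : ContDiff ℝ 1 ω := (h1.smul contDiff_const).add (h2.smul contDiff_const)
  have hdω : ∀ a, HasFDerivAt ω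
      ((fderiv ℝ L1 a).smulRight A + (fderiv ℝ L2 a).smulRight B) a := fun a =>
    ((h1.differentiable one_ne_zero a).hasFDerivAt.smul_const A).add
      ((h2.differentiable one_ne_zero a).hasFDerivAt.smul_const B)
  have hexp : ∀ (D : ℝ × ℝ →L[ℝ] ℝ) (x : ℝ × ℝ), D x = x.1 * D (1, 0) + x.2 * D (0, 1) := by
    intro D x
    have hx : x = x.1 • ((1, 0) : ℝ × ℝ) + x.2 • ((0, 1) : ℝ × ℝ) := by ext <;> simp
    conv_lhs => rw [hx, map_add, map_smul, map_smul]
    simp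
  obtain ⟨W, hW⟩ := convex_univ.exists_forall_hasFDerivAt_of_fderiv_symmetric isOpen_univ
    (hω.differentiable one_ne_zero).differentiableOn (by
      intro a _ x y
      rw [(hdω a).fderiv]
      simp only [add_apply, ContinuousLinearMap.smulRight_apply,
        smul_apply, smul_eq_mul, A, B, ContinuousLinearMap.coe_fst',
        ContinuousLinearMap.coe_snd']
      rw [hexp (fderiv ℝ L1 a) x, hexp (fderiv ℝ L1 a) y, hexp (fderiv ℝ L2 a) x,
        hexp (fderiv ℝ L2 a) y, hsymm a]
      ring)
  have hW' : ∀ p, HasFDerivAt W (ω p) p := fun p => hW p (Set.mem_univ p)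
  refine ⟨W, ?_, fun x y => ?_, fun x y => ?_⟩
  · have h : ContDiff ℝ (1 + 1) W := by
      refine contDiff_succ_iff_fderiv.2 ⟨fun p => (hW' p).differentiableAt, by simp, ?_⟩
      rwa [show fderiv ℝ W = ω from funext fun p => (hW' p).fderiv]
    simpa [one_add_one_eq_two] using h
  · simpa [ω, A, B] using hasDerivAt_fst (hW' (x, y))
  · simpa [ω, A, B] using hasDerivAt_snd (hW' (x, y))

/-- A primitive in one variable has the same increments as the integral from `0`. -/
lemma sub_eq_integral_sub {w l : ℝ → ℝ} (hl : Continuous l) (hw : ∀ x, HasDerivAt w (l x) x)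
    (x x' : ℝ) : w x - w x' = (∫ u in (0:ℝ)..x, l u) - ∫ u in (0:ℝ)..x', l u := by
  rw [intervalIntegral.integral_interval_sub_left (hl.intervalIntegrable _ _)
    (hl.intervalIntegrable _ _),
    intervalIntegral.integral_eq_sub_of_hasDerivAt (fun u _ => hw u) (hl.intervalIntegrable _ _)]

/-- The toll is `C¹` and makes the tolled costs satisfy `∂₂L₁ = ∂₁L₂`, so each edge has a `C²`
function whose partial derivatives are the tolled costs. -/
lemma exists_edge_potential {l1 l2 : ℝ × ℝ → ℝ} (h1 : ContDiff ℝ 2 l1) (h2 : ContDiff ℝ 2 l2)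
    (c : ℝ) {ψ : ℝ → ℝ} (hψ : ContDiff ℝ 1 ψ) {f : ℝ → ℝ → ℝ}
    (hf : ∀ x y, f x y = deriv (fun t => l2 (t, x)) y - deriv (fun t => l1 (y, t)) x)
    {T : ℝ × ℝ → ℝ}
    (hT : ∀ x y, T (x, y) = c + (∫ q in (0:ℝ)..y, f q (x + y - q)) + ψ (x + y)) :
    Continuous T ∧ ∃ W : ℝ × ℝ → ℝ, ContDiff ℝ 2 W ∧
      (∀ x y, HasDerivAt (fun t => W (t, y)) (l1 (x, y) + T (x, y)) x) ∧
      (∀ x y, HasDerivAt (fun t => W (x, t)) (l2 (x, y) + T (x, y)) y) := by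
  have d1 : ∀ p, HasFDerivAt l1 (fderiv ℝ l1 p) p := fun p =>
    (h1.differentiable two_ne_zero p).hasFDerivAt
  have d2 : ∀ p, HasFDerivAt l2 (fderiv ℝ l2 p) p := fun p =>
    (h2.differentiable two_ne_zero p).hasFDerivAt
  let k : ℝ × ℝ → ℝ := fun p => fderiv ℝ l2 p (1, 0) - fderiv ℝ l1 p (0, 1)
  have hk : ContDiff ℝ 1 k :=
    ((h2.fderiv_right (by norm_num [one_add_one_eq_two])).clm_apply contDiff_const).sub
      ((h1.fderiv_right (by norm_num [one_add_one_eq_two])).clm_apply contDiff_const)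
  have hfk : ∀ x y, f x y = k (y, x) := fun x y => by
    rw [hf, (hasDerivAt_fst (d2 (y, x))).deriv, (hasDerivAt_snd (d1 (y, x))).deriv]
  have hTk : T = fun p : ℝ × ℝ =>
      c + (∫ q in (0:ℝ)..p.2, k (p.1 + p.2 - q, q)) + ψ (p.1 + p.2) := by
    funext ⟨x, y⟩
    simp only [hT, hfk]
  have hTC : ContDiff ℝ 1 T := by
    rw [hTk]
    exact (contDiff_const.add (contDiff_toll hk)).add (hψ.comp (contDiff_fst.add contDiff_snd))
  have dT : ∀ p, HasFDerivAt T (fderiv ℝ T p) p := fun p =>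
    (hTC.differentiable one_ne_zero p).hasFDerivAt
  have htrans : ∀ p, fderiv ℝ T p (-1, 1) = k p := by
    rintro ⟨x, y⟩
    have e1 : HasDerivAt (fun t : ℝ => T (x - t, y + t)) (fderiv ℝ T (x, y) (-1, 1)) 0 := by
      refine HasFDerivAt.comp_hasDerivAt (f := fun t : ℝ => (x - t, y + t)) 0 ?_
        (((hasDerivAt_id (0:ℝ)).const_sub x).prodMk ((hasDerivAt_id (0:ℝ)).const_add y))
      simpa using dT (x, y)
    have e2 : HasDerivAt (fun t : ℝ => T (x - t, y + t)) (k (x, y)) 0 := by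
      have e3 := ((hasDerivAt_toll_diagonal hk.continuous x y).const_add c).add_const (ψ (x + y))
      have e4 : (fun t : ℝ => T (x - t, y + t)) = fun t =>
          c + (∫ q in (0:ℝ)..(y + t), k ((x - t) + (y + t) - q, q)) + ψ (x + y) := by
        funext t
        rw [hTk]
        simp only [show x - t + (y + t) = x + y by ring]
      rwa [e4]
    exact e1.unique e2
  refine ⟨hTC.continuous, exists_primitive (L1 := fun p => l1 p + T p) (L2 := fun p => l2 p + T p)
    ((h1.of_le one_le_two).add hTC) ((h2.of_le one_le_two).add hTC) fun p => ?_⟩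
  have hp : fderiv ℝ T p (-1, 1) = fderiv ℝ T p (0, 1) - fderiv ℝ T p (1, 0) := by
    rw [← map_sub]
    simp
  have hkp := htrans p
  rw [((d1 p).fun_add (dT p)).fderiv, ((d2 p).fun_add (dT p)).fderiv]
  simp only [add_apply]
  simp only [k] at hkp
  linarith

/-- **Corollary 3 (indistinguishable types).** With two types and twice continuously
differentiable edge cost functions, the type-independent tolls
`τ̃_e(x,y) = c_e + ∫_0^y f_e(q, x+y−q) dq + ψ_e(x+y)`, with `c_e ≥ 0`, `ψ_e ∈ C¹` and
`f_e(x,y) = ∂₁ℓ̃_e^{θ₂}(y,x) − ∂₂ℓ̃_e^{θ₁}(y,x)`, guarantee that the abstract game of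
the routing game with these tolls admits a potential function of class `C²`. -/
theorem tolls_formula_potential {E P : Type*} [Fintype E] [Fintype P]
    (edges : P → Finset E) (ℓ1 ℓ2 : E → ℝ → ℝ → ℝ)
    (hℓ1 : ∀ e, ContDiff ℝ 2 (fun q : ℝ × ℝ => ℓ1 e q.1 q.2))
    (hℓ2 : ∀ e, ContDiff ℝ 2 (fun q : ℝ × ℝ => ℓ2 e q.1 q.2))
    (c : E → ℝ) (hc : ∀ e, 0 ≤ c e)
    (ψ : E → ℝ → ℝ) (hψ : ∀ e, ContDiff ℝ 1 (ψ e))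
    (fE : E → ℝ → ℝ → ℝ)
    (hfE : ∀ (e : E) (x y : ℝ),
      fE e x y = deriv (fun t => ℓ2 e t x) y - deriv (fun t => ℓ1 e y t) x)
    (τ : E → ℝ → ℝ → ℝ)
    (hτ : ∀ (e : E) (x y : ℝ),
      τ e x y = c e + (∫ q in (0:ℝ)..y, fE e q (x + y - q)) + ψ e (x + y)) :
    ∃ V : (P → ℝ) → (P → ℝ) → ℝ,
      ContDiff ℝ 2 (fun q : (P → ℝ) × (P → ℝ) => V q.1 q.2) ∧
      IsPotential edges
        (fun e x y => ℓ1 e x y + τ e x y) (fun e x y => ℓ2 e x y + τ e x y) V := by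
  have key := fun e => exists_edge_potential (hℓ1 e) (hℓ2 e) (c e) (hψ e) (hfE e)
    (T := fun p => τ e p.1 p.2) (hτ e)
  choose hTc W hW hW1 hW2 using key
  refine ⟨fun g h => ∑ e, W e (edgeFlow edges g e, edgeFlow edges h e), ?_, ?_, ?_⟩
  · refine ContDiff.sum fun e _ => (hW e).comp ?_
    unfold edgeFlow
    fun_prop
  · intro g g' h
    simp only [U1, ← Finset.sum_sub_distrib]
    refine Finset.sum_congr rfl fun e _ => ?_
    refine sub_eq_integral_sub (w := fun t => W e (t, edgeFlow edges h e)) ?_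
      (fun x => hW1 e x _) _ _
    exact ((hℓ1 e).continuous.add (hTc e)).comp
      (by fun_prop : Continuous fun u : ℝ => (u, edgeFlow edges h e))
  · intro g h h'
    simp only [U2, ← Finset.sum_sub_distrib]
    refine Finset.sum_congr rfl fun e _ => ?_
    refine sub_eq_integral_sub (w := fun t => W e (edgeFlow edges g e, t)) ?_
      (fun y => hW2 e _ y) _ _
    exact ((hℓ2 e).continuous.add (hTc e)).comp
      (by fun_prop : Continuous fun u : ℝ => (edgeFlow edges g e, u))

end RoutingGame
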